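/- Let H = Σ_{i=1}^{[(n-1)/2]} H_{2i+1} and let [x_p]_{2t+3} ∈ E_{2t+3}^{p,q} with t ≥ 1. Then there exist forms x_{p+2i} = x_{p+2i}^{(t)} ∈ Ω^{p+2i}(M) for 1 ≤ i ≤ t such that, setting x = x_p + Σ_{i=1}^{t} x_{p+2i}^{(t)} (and higher components arbitrary), the homogeneous components y_{p+2j+1} of Dx vanish for 0 ≤ j ≤ t, and the differential is given by the cup-product formula d_{2t+3}[x_p]_{2t+3} = [Σ_{i=1}^{t} H_{2i+1} ∧ x_{p+2(t−i)+2}^{(t)} + H_{2t+3} ∧ x_p]_{2t+3}. -/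

import Mathlib

section TwistedSetup

variable {W : Type} [Ring W] [Algebra ℝ W]

/-- The filtration `K_p = ⊕_{i ≥ p} Ω^i(M)` of the (abstractly modelled) de Rham complex. -/
def Kfil (A : ℤ → Submodule ℝ W) (p : ℤ) : Submodule ℝ W :=
  ⨆ i : ℤ, ⨆ _ : p ≤ i, A i

/-- The submodule of (sums of) forms of pure parity `m (mod 2)`. -/
def ParPart (A : ℤ → Submodule ℝ W) (m : ℤ) : Submodule ℝ W :=
  ⨆ i : ℤ, ⨆ _ : i % 2 = m % 2, A i

/-- `Z_r^{p,q}`: elements of `K_p` of total parity `p + q` whose differential lies in `K_{p+r}`. -/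
def Zcyc (A : ℤ → Submodule ℝ W) (D : W →ₗ[ℝ] W) (r : ℕ) (p q : ℤ) : Submodule ℝ W :=
  Kfil A p ⊓ ParPart A (p + q) ⊓ (Kfil A (p + r)).comap D

/-- The boundaries `B_r^{p,q} = Z_{r-1}^{p+1,q-1} + D Z_{r-1}^{p-r+1,q+r-2}`. -/
def Bbd (A : ℤ → Submodule ℝ W) (D : W →ₗ[ℝ] W) (r : ℕ) (p q : ℤ) : Submodule ℝ W :=
  Zcyc A D (r - 1) (p + 1) (q - 1) ⊔ (Zcyc A D (r - 1) (p - r + 1) (q + r - 2)).map D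

/-- The page `E_r^{p,q}` of the spectral sequence of the filtered complex `(Ω^*(M), D)`. -/
abbrev Epage (A : ℤ → Submodule ℝ W) (D : W →ₗ[ℝ] W) (r : ℕ) (p q : ℤ) : Type :=
  ↥(Zcyc A D r p q) ⧸ (Bbd A D r p q).comap (Zcyc A D r p q).subtype

/-- The class `[z]_r ∈ E_r^{p,q}` of a cocycle `z ∈ Z_r^{p,q}`. -/
def pageCls (A : ℤ → Submodule ℝ W) (D : W →ₗ[ℝ] W) (r : ℕ) (p q : ℤ)
    (z : W) (hz : z ∈ Zcyc A D r p q) : Epage A D r p q :=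
  Submodule.Quotient.mk ⟨z, hz⟩

open Classical in
noncomputable def dpageCore (A : ℤ → Submodule ℝ W) (D : W →ₗ[ℝ] W) (r : ℕ) (p q : ℤ) :
    Epage A D r p q →ₗ[ℝ] Epage A D r (p + r) (q - r + 1) :=
  if h : (∀ x ∈ Zcyc A D r p q, D x ∈ Zcyc A D r (p + r) (q - r + 1)) ∧
      (∀ x ∈ Zcyc A D r p q, x ∈ Bbd A D r p q → D x ∈ Bbd A D r (p + r) (q - r + 1)) then
    Submodule.liftQ _
      (((Bbd A D r (p + r) (q - r + 1)).comap (Zcyc A D r (p + r) (q - r + 1)).subtype).mkQ.comp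
        (LinearMap.codRestrict (Zcyc A D r (p + r) (q - r + 1))
          (D.comp (Zcyc A D r p q).subtype) (fun x => h.1 x x.2)))
      (by
        intro x hx
        simp only [Submodule.mem_comap] at hx
        simp only [LinearMap.mem_ker, LinearMap.comp_apply, Submodule.mkQ_apply,
          Submodule.Quotient.mk_eq_zero, Submodule.mem_comap, LinearMap.codRestrict_apply,
          Submodule.subtype_apply]
        exact h.2 x x.2 hx)
  else 0

/-- The differential `d_r : E_r^{p,q} → E_r^{p+r,q-r+1}` of the spectral sequence,
induced by `D`. -/
noncomputable def dpage (A : ℤ → Submodule ℝ W) (D : W →ₗ[ℝ] W) (r : ℕ) (p q p' q' : ℤ)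
    (hp : p' = p + r) (hq : q' = q - r + 1) :
    Epage A D r p q →ₗ[ℝ] Epage A D r p' q' := by
  subst hp; subst hq; exact dpageCore A D r p q

end TwistedSetup

/-!
Write `c_k` for the component of degree `p + 2 k` of a cocycle `z ∈ Z_{2t+3}^{p,q}` with leading
term `x`. Since `D` raises degrees by odd positive amounts, the component of `D z` of degree
`p + 2 j + 1` involves only `c_0, …, c_j`, so the condition `D z ∈ K_{p+2t+3}` contains the
relations `d c_j + ∑_{i=1}^j H_{2i+1} c_{j-i} = 0` for `j ≤ t`. The truncation `c_0 + ⋯ + c_t`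
satisfies the same relations and is therefore again a cocycle. As it has no component `c_{t+1}`,
the term `d c_{t+1}` disappears from the leading component of its image under `D`, and what is left
is the cup-product expression.
-/

section GradedComponent

variable {ι R M : Type*} [DecidableEq ι] [Semiring R] [AddCommMonoid M] [Module R M]
  (A : ι → Submodule R M) [DirectSum.Decomposition A]

/-- The projection of a graded module onto its homogeneous elements of degree `k`, as an
endomorphism. It is `GradedAlgebra.proj` without the multiplicative structure. -/
noncomputable def gradedComponent (k : ι) : M →ₗ[R] M :=
  (A k).subtype ∘ₗ DirectSum.component R ι (fun i => A i) k ∘ₗ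
    (DirectSum.decomposeLinearEquiv A).toLinearMap

theorem gradedComponent_apply (k : ι) (w : M) :
    gradedComponent A k w = (DirectSum.decompose A w k : M) :=
  rfl

theorem gradedComponent_mem (k : ι) (w : M) : gradedComponent A k w ∈ A k :=
  (DirectSum.decompose A w k).2

variable {A}

theorem gradedComponent_of_mem {i : ι} {w : M} (hw : w ∈ A i) (k : ι) :
    gradedComponent A k w = if k = i then w else 0 := by
  rw [gradedComponent_apply]
  split_ifs with h
  · subst h
    exact DirectSum.decompose_of_mem_same A hw
  · exact DirectSum.decompose_of_mem_ne A hw (Ne.symm h)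

theorem mem_iSup_iff_gradedComponent_eq_zero (P : ι → Prop) (w : M) :
    w ∈ ⨆ i, ⨆ _ : P i, A i ↔ ∀ k, ¬ P k → gradedComponent A k w = 0 := by
  classical
  refine ⟨fun hw k hk => ?_, fun h => ?_⟩
  · have hker : ⨆ i, ⨆ _ : P i, A i ≤ LinearMap.ker (gradedComponent A k) :=
      iSup₂_le fun i hi v hv => by
        rw [LinearMap.mem_ker, gradedComponent_of_mem hv, if_neg (by rintro rfl; exact hk hi)]
    exact hker hw
  · rw [← DirectSum.sum_support_decompose A w]
    refine Submodule.sum_mem _ fun i hi => ?_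
    have hPi : P i := by
      by_contra hPi
      exact DFinsupp.mem_support_iff.1 hi (Subtype.ext (h i hPi))
    exact Submodule.mem_iSup_of_mem i (Submodule.mem_iSup_of_mem hPi (gradedComponent_mem A i w))

theorem gradedComponent_mem_iSup {P : ι → Prop} {w : M} (hw : w ∈ ⨆ i, ⨆ _ : P i, A i) (k : ι) :
    gradedComponent A k w ∈ ⨆ i, ⨆ _ : P i, A i := by
  by_cases hk : P k
  · exact Submodule.mem_iSup_of_mem k (Submodule.mem_iSup_of_mem hk (gradedComponent_mem A k w))
  · rw [(mem_iSup_iff_gradedComponent_eq_zero P w).1 hw k hk]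
    exact Submodule.zero_mem _

theorem gradedComponent_map_of_degree [AddGroup ι] {e : ι} {f : M →ₗ[R] M}
    (hf : ∀ i, ∀ x ∈ A i, f x ∈ A (i + e)) (k : ι) (w : M) :
    gradedComponent A k (f w) = f (gradedComponent A (k - e) w) := by
  induction w using DirectSum.Decomposition.inductionOn A with
  | zero => simp only [map_zero]
  | @homogeneous i v =>
    rw [gradedComponent_of_mem (hf i v v.2), gradedComponent_of_mem v.2, apply_ite f, map_zero]
    simp only [sub_eq_iff_eq_add]
  | add a b ha hb => simp only [map_add, ha, hb]

end GradedComponent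

section Filtration

variable {W : Type} [Ring W] [Algebra ℝ W] {A : ℤ → Submodule ℝ W}

theorem mem_Kfil_of_mem {i p : ℤ} (hpi : p ≤ i) {w : W} (hw : w ∈ A i) : w ∈ Kfil A p :=
  Submodule.mem_iSup_of_mem i (Submodule.mem_iSup_of_mem hpi hw)

theorem mem_ParPart_of_mem {i m : ℤ} (him : i % 2 = m % 2) {w : W} (hw : w ∈ A i) :
    w ∈ ParPart A m :=
  Submodule.mem_iSup_of_mem i (Submodule.mem_iSup_of_mem him hw)

variable [DirectSum.Decomposition A]

theorem mem_Kfil_iff {p : ℤ} {w : W} :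
    w ∈ Kfil A p ↔ ∀ k < p, gradedComponent A k w = 0 := by
  simpa only [Kfil, not_le] using mem_iSup_iff_gradedComponent_eq_zero (A := A) (p ≤ ·) w

theorem mem_ParPart_iff {m : ℤ} {w : W} :
    w ∈ ParPart A m ↔ ∀ k, k % 2 ≠ m % 2 → gradedComponent A k w = 0 :=
  mem_iSup_iff_gradedComponent_eq_zero (fun i => i % 2 = m % 2) w

theorem sub_gradedComponent_mem_Kfil {p : ℤ} {w : W} (hw : w ∈ Kfil A p) :
    w - gradedComponent A p w ∈ Kfil A (p + 1) := by
  rw [mem_Kfil_iff] at hw ⊢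
  intro k hk
  rw [map_sub, gradedComponent_of_mem (gradedComponent_mem A p w)]
  split_ifs with hkp
  · rw [hkp, sub_self]
  · rw [hw k (by omega), sub_zero]

theorem gradedComponent_eq_of_sub_mem_Kfil {p : ℤ} {x z : W} (hx : x ∈ A p)
    (hzx : z - x ∈ Kfil A (p + 1)) : gradedComponent A p z = x := by
  have h := mem_Kfil_iff.1 hzx p (lt_add_one p)
  rwa [map_sub, gradedComponent_of_mem hx, if_pos rfl, sub_eq_zero] at h

end Filtration

section PageDifferential

variable {W : Type} [Ring W] [Algebra ℝ W] {A : ℤ → Submodule ℝ W} {D : W →ₗ[ℝ] W} {r : ℕ}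
  {p q : ℤ}

theorem map_mem_Zcyc (hDD : ∀ w, D (D w) = 0)
    (hpar : ∀ m, ∀ w ∈ ParPart A m, D w ∈ ParPart A (m + 1)) {p' q' : ℤ} (hp : p' = p + r)
    (hq : q' = q - r + 1) {z : W} (hz : z ∈ Zcyc A D r p q) : D z ∈ Zcyc A D r p' q' := by
  subst hp hq
  refine ⟨⟨hz.2, ?_⟩, ?_⟩
  · rw [show p + r + (q - r + 1) = p + q + 1 by ring]
    exact hpar _ z hz.1.2
  · change D (D z) ∈ Kfil A _
    rw [hDD]
    exact Submodule.zero_mem _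

theorem map_mem_Bbd (hDD : ∀ w, D (D w) = 0) {b : W} (hb : b ∈ Bbd A D r p q) :
    D b ∈ Bbd A D r (p + r) (q - r + 1) := by
  obtain ⟨a, ha, _, ⟨c, -, rfl⟩, rfl⟩ := Submodule.mem_sup.1 hb
  rw [map_add, hDD, add_zero]
  refine Submodule.mem_sup_right ⟨a, ?_, rfl⟩
  rwa [show p + (r : ℤ) - r + 1 = p + 1 by ring, show q - (r : ℤ) + 1 + r - 2 = q - 1 by ring]

theorem dpage_pageCls (hDD : ∀ w, D (D w) = 0)
    (hpar : ∀ m, ∀ w ∈ ParPart A m, D w ∈ ParPart A (m + 1)) {p' q' : ℤ} (hp : p' = p + r)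
    (hq : q' = q - r + 1) {z : W} (hz : z ∈ Zcyc A D r p q) (hDz : D z ∈ Zcyc A D r p' q') :
    dpage A D r p q p' q' hp hq (pageCls A D r p q z hz) = pageCls A D r p' q' (D z) hDz := by
  subst hp hq
  change dpageCore A D r p q (pageCls A D r p q z hz) = _
  rw [dpageCore, dif_pos ⟨fun _ => map_mem_Zcyc hDD hpar rfl rfl, fun _ _ => map_mem_Bbd hDD⟩]
  rfl

end PageDifferential

section SquareZero

theorem sum_mul_sum_self_eq_zero_of_anticommute {ι R : Type*} [NonUnitalNonAssocRing R]
    [IsAddTorsionFree R] {s : Finset ι} {f : ι → R}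
    (h : ∀ i ∈ s, ∀ j ∈ s, f i * f j = -(f j * f i)) : (∑ i ∈ s, f i) * ∑ i ∈ s, f i = 0 := by
  rw [← self_eq_neg, Finset.sum_mul_sum]
  nth_rw 2 [Finset.sum_comm]
  simp only [← Finset.sum_neg_distrib]
  exact Finset.sum_congr rfl fun i hi => Finset.sum_congr rfl fun j hj => h i hi j hj

theorem map_sum_mul_eq_neg {ι F W : Type*} [NonUnitalNonAssocRing W] [FunLike F W W]
    [AddMonoidHomClass F W W] {d : F} {s : Finset ι} {f : ι → W}
    (h : ∀ i ∈ s, ∀ w, d (f i * w) = -(f i * d w)) (w : W) :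
    d ((∑ i ∈ s, f i) * w) = -((∑ i ∈ s, f i) * d w) := by
  simp only [Finset.sum_mul, map_sum, ← Finset.sum_neg_distrib]
  exact Finset.sum_congr rfl fun i hi => h i hi w

theorem twisted_apply_apply_eq_zero {F W : Type*} [NonUnitalRing W] [FunLike F W W]
    [AddMonoidHomClass F W W] {d : F} {D : W → W} {H : W} (hD : ∀ w, D w = d w + H * w)
    (hd2 : ∀ w, d (d w) = 0) (hdH : ∀ w, d (H * w) = -(H * d w)) (hHH : H * H = 0) (w : W) :
    D (D w) = 0 := by
  rw [hD (D w), hD w, map_add, hd2, hdH, mul_add, ← mul_assoc, hHH, zero_mul, zero_add, add_zero,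
    neg_add_cancel]

end SquareZero

/-- `D = d + H` is a twisted differential on the graded algebra `W = ⨁ i, A i`, where `d` has
degree one and `H = ∑ i ∈ Icc 1 m, Hc i` acts by left multiplication; the summand `Hc i`, which is
`H_{2i+1}` in the paper, raises degrees by `2i + 1` and is zero beyond the range of summation. The
condition `D ∘ D = 0` is not included. -/
structure IsTwistedDifferential {R W : Type*} [CommSemiring R] [Semiring W] [Algebra R W]
    (A : ℤ → Submodule R W) (d D : W →ₗ[R] W) (Hc : ℕ → W) (m : ℕ) : Prop where
  map_mem : ∀ k, ∀ w ∈ A k, d w ∈ A (k + 1)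
  mul_mem : ∀ (i : ℕ) (k : ℤ), ∀ w ∈ A k, Hc i * w ∈ A (k + (2 * i + 1))
  eq_zero_of_lt : ∀ i, m < i → Hc i = 0
  apply_eq : ∀ w, D w = d w + (∑ i ∈ Finset.Icc 1 m, Hc i) * w

namespace IsTwistedDifferential

section Component

variable {R W : Type*} [CommSemiring R] [Semiring W] [Algebra R W] {A : ℤ → Submodule R W}
  [DirectSum.Decomposition A] {d D : W →ₗ[R] W} {Hc : ℕ → W} {m : ℕ}

theorem gradedComponent_map (hD : IsTwistedDifferential A d D Hc m) (k : ℤ) (w : W) :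
    gradedComponent A k (D w) = d (gradedComponent A (k - 1) w) +
      ∑ i ∈ Finset.Icc 1 m, Hc i * gradedComponent A (k - (2 * i + 1)) w := by
  rw [hD.apply_eq, map_add, gradedComponent_map_of_degree hD.map_mem, Finset.sum_mul, map_sum]
  congr 1
  exact Finset.sum_congr rfl fun i _ =>
    gradedComponent_map_of_degree (f := LinearMap.mulLeft R (Hc i)) (hD.mul_mem i) k w

theorem gradedComponent_map_eq_zero (hD : IsTwistedDifferential A d D Hc m) {k : ℤ} {w : W}
    (hw : ∀ i : ℕ, gradedComponent A (k - (2 * i + 1)) w = 0) :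
    gradedComponent A k (D w) = 0 := by
  have hd : gradedComponent A (k - 1) w = 0 := by simpa using hw 0
  simp only [hD.gradedComponent_map, hd, hw, map_zero, mul_zero, Finset.sum_const_zero, add_zero]

end Component

variable {W : Type} [Ring W] [Algebra ℝ W] {A : ℤ → Submodule ℝ W} [DirectSum.Decomposition A]
  {d D : W →ₗ[ℝ] W} {Hc : ℕ → W} {m : ℕ}

theorem map_mem_Kfil (hD : IsTwistedDifferential A d D Hc m) {p : ℤ} {w : W}
    (hw : w ∈ Kfil A p) : D w ∈ Kfil A (p + 1) :=
  mem_Kfil_iff.2 fun _ hk =>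
    hD.gradedComponent_map_eq_zero fun _ => mem_Kfil_iff.1 hw _ (by omega)

theorem map_mem_ParPart (hD : IsTwistedDifferential A d D Hc m) (k : ℤ) (w : W)
    (hw : w ∈ ParPart A k) : D w ∈ ParPart A (k + 1) :=
  mem_ParPart_iff.2 fun _ hk =>
    hD.gradedComponent_map_eq_zero fun _ => mem_ParPart_iff.1 hw _ (by omega)

/-- The left-hand side is `y_{p+2j+1}` in the notation of the paper. -/
theorem gradedComponent_map_of_mem_Kfil (hD : IsTwistedDifferential A d D Hc m) {p : ℤ} {w : W}
    (hw : w ∈ Kfil A p) (j : ℕ) :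
    gradedComponent A (p + 2 * j + 1) (D w) = d (gradedComponent A (p + 2 * j) w) +
      ∑ i ∈ Finset.Icc 1 j, Hc i * gradedComponent A (p + 2 * (j - i : ℕ)) w := by
  rw [hD.gradedComponent_map, add_sub_cancel_right]
  congr 1
  refine Finset.sum_congr_of_eq_on_inter (fun i hi hij => ?_) (fun i hi him => ?_)
    fun i _ hij => ?_
  · rw [Finset.mem_Icc] at hi hij
    rw [mem_Kfil_iff.1 hw _ (by omega), mul_zero]
  · rw [Finset.mem_Icc] at hi him
    rw [hD.eq_zero_of_lt i (by omega), zero_mul]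
  · rw [Finset.mem_Icc] at hij
    rw [show p + 2 * (j : ℤ) + 1 - (2 * i + 1) = p + 2 * (j - i : ℕ) by omega]

end IsTwistedDifferential

theorem gradedComponent_sum_range {R M : Type*} [Semiring R] [AddCommMonoid M] [Module R M]
    {A : ℤ → Submodule R M} [DirectSum.Decomposition A] {p : ℤ} {xs : ℕ → M}
    (hxs : ∀ i : ℕ, xs i ∈ A (p + 2 * i)) (s j : ℕ) :
    gradedComponent A (p + 2 * j) (∑ i ∈ Finset.range s, xs i) = if j < s then xs j else 0 := by
  simp only [map_sum, gradedComponent_of_mem (hxs _), add_right_inj, mul_eq_mul_left_iff,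
    Nat.cast_inj, OfNat.ofNat_ne_zero, or_false, Finset.sum_ite_eq, Finset.mem_range]

section EvenSum

variable {W : Type} [Ring W] [Algebra ℝ W] {A : ℤ → Submodule ℝ W} {p : ℤ} {xs : ℕ → W}

theorem sum_range_mem_Kfil (hxs : ∀ i : ℕ, xs i ∈ A (p + 2 * i)) (s : ℕ) :
    ∑ i ∈ Finset.range s, xs i ∈ Kfil A p :=
  Submodule.sum_mem _ fun i _ => mem_Kfil_of_mem (by omega) (hxs i)

theorem sum_range_mem_ParPart (hxs : ∀ i : ℕ, xs i ∈ A (p + 2 * i)) (s : ℕ) :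
    ∑ i ∈ Finset.range s, xs i ∈ ParPart A p :=
  Submodule.sum_mem _ fun i _ => mem_ParPart_of_mem (by omega) (hxs i)

end EvenSum

namespace IsTwistedDifferential

variable {W : Type} [Ring W] [Algebra ℝ W] {A : ℤ → Submodule ℝ W} [DirectSum.Decomposition A]
  {d D : W →ₗ[ℝ] W} {Hc : ℕ → W} {m : ℕ} {p : ℤ} {xs : ℕ → W} {s : ℕ}

theorem gradedComponent_map_sum_range_of_lt (hD : IsTwistedDifferential A d D Hc m)
    (hxs : ∀ i : ℕ, xs i ∈ A (p + 2 * i)) {j : ℕ} (hj : j < s) :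
    gradedComponent A (p + 2 * j + 1) (D (∑ i ∈ Finset.range s, xs i)) =
      d (xs j) + ∑ i ∈ Finset.Icc 1 j, Hc i * xs (j - i) := by
  rw [hD.gradedComponent_map_of_mem_Kfil (sum_range_mem_Kfil hxs s), gradedComponent_sum_range hxs,
    if_pos hj]
  congr 1
  exact Finset.sum_congr rfl fun i _ => by rw [gradedComponent_sum_range hxs, if_pos (by omega)]

theorem gradedComponent_map_sum_range_self (hD : IsTwistedDifferential A d D Hc m)
    (hxs : ∀ i : ℕ, xs i ∈ A (p + 2 * i)) :
    gradedComponent A (p + 2 * s + 1) (D (∑ i ∈ Finset.range s, xs i)) =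
      ∑ i ∈ Finset.Icc 1 s, Hc i * xs (s - i) := by
  rw [hD.gradedComponent_map_of_mem_Kfil (sum_range_mem_Kfil hxs s), gradedComponent_sum_range hxs,
    if_neg (lt_irrefl s), map_zero, zero_add]
  refine Finset.sum_congr rfl fun i hi => ?_
  rw [Finset.mem_Icc] at hi
  rw [gradedComponent_sum_range hxs, if_pos (by omega)]

theorem map_sum_range_mem_Kfil (hD : IsTwistedDifferential A d D Hc m)
    (hxs : ∀ i : ℕ, xs i ∈ A (p + 2 * i))
    (hrel : ∀ j < s, d (xs j) + ∑ i ∈ Finset.Icc 1 j, Hc i * xs (j - i) = 0) :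
    D (∑ i ∈ Finset.range s, xs i) ∈ Kfil A (p + 2 * s + 1) := by
  refine mem_Kfil_iff.2 fun k hk => ?_
  rcases lt_or_ge k (p + 1) with hkp | hkp
  · exact mem_Kfil_iff.1 (hD.map_mem_Kfil (sum_range_mem_Kfil hxs s)) k hkp
  by_cases hpar : k % 2 = (p + 1) % 2
  · obtain ⟨j, rfl⟩ : ∃ j : ℕ, k = p + 2 * j + 1 := ⟨((k - p - 1) / 2).toNat, by omega⟩
    have hj : j < s := by omega
    rw [hD.gradedComponent_map_sum_range_of_lt hxs hj, hrel j hj]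
  · have hodd := hD.map_mem_ParPart p _ (sum_range_mem_ParPart hxs s)
    exact mem_ParPart_iff.1 hodd k hpar

theorem map_sum_range_sub_mem_Kfil (hD : IsTwistedDifferential A d D Hc m)
    (hxs : ∀ i : ℕ, xs i ∈ A (p + 2 * i))
    (hrel : ∀ j < s, d (xs j) + ∑ i ∈ Finset.Icc 1 j, Hc i * xs (j - i) = 0) :
    D (∑ i ∈ Finset.range s, xs i) - ∑ i ∈ Finset.Icc 1 s, Hc i * xs (s - i) ∈
      Kfil A (p + 2 * s + 2) := by
  rw [← hD.gradedComponent_map_sum_range_self hxs,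
    show p + 2 * (s : ℤ) + 2 = p + 2 * s + 1 + 1 by ring]
  exact sub_gradedComponent_mem_Kfil (hD.map_sum_range_mem_Kfil hxs hrel)

theorem relation_of_map_mem_Kfil (hD : IsTwistedDifferential A d D Hc m) {z : W}
    (hz : z ∈ Kfil A p) {k : ℤ} (hDz : D z ∈ Kfil A k) {j : ℕ} (hj : p + 2 * j + 1 < k) :
    d (gradedComponent A (p + 2 * j) z) +
      ∑ i ∈ Finset.Icc 1 j, Hc i * gradedComponent A (p + 2 * (j - i : ℕ)) z = 0 :=
  (hD.gradedComponent_map_of_mem_Kfil hz j).symm.trans (mem_Kfil_iff.1 hDz _ hj)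

end IsTwistedDifferential

theorem add_sum_Icc_one_eq_sum_range {M : Type*} [AddCommMonoid M] (f : ℕ → M) (t : ℕ) :
    f 0 + ∑ i ∈ Finset.Icc 1 t, f i = ∑ i ∈ Finset.range (t + 1), f i := by
  rw [Finset.sum_range_eq_add_Ico f t.add_one_pos, ← Finset.Ico_add_one_right_eq_Icc]

theorem sum_Icc_mul_add_eq_sum_Icc_succ {W : Type*} [NonUnitalNonAssocSemiring W]
    (f g : ℕ → W) (t : ℕ) :
    ∑ i ∈ Finset.Icc 1 t, f i * g (t - i + 1) + f (t + 1) * g 0 =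
      ∑ i ∈ Finset.Icc 1 (t + 1), f i * g (t + 1 - i) := by
  rw [Finset.sum_Icc_succ_top (by omega), Nat.sub_self]
  congr 1
  refine Finset.sum_congr rfl fun i hi => ?_
  rw [Nat.sub_add_comm (Finset.mem_Icc.1 hi).2]

theorem isTwistedDifferential_of_bounded {R W : Type*} [CommSemiring R] [Semiring W] [Algebra R W]
    {A : ℤ → Submodule R W} {d D : W →ₗ[R] W} {Hc : ℕ → W} {n : ℕ}
    (hbound : ∀ i : ℤ, (n : ℤ) < i → A i = ⊥)
    (hmul : ∀ (i j : ℤ) (x y : W), x ∈ A i → y ∈ A j → x * y ∈ A (i + j))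
    (hdmem : ∀ i : ℤ, ∀ x ∈ A i, d x ∈ A (i + 1)) (hHmem : ∀ i : ℕ, Hc i ∈ A (2 * (i : ℤ) + 1))
    (hD : ∀ w, D w = d w + (∑ i ∈ Finset.Icc 1 ((n - 1) / 2), Hc i) * w) :
    IsTwistedDifferential A d D Hc ((n - 1) / 2) where
  map_mem := hdmem
  mul_mem i k w hw := add_comm (2 * (i : ℤ) + 1) k ▸ hmul _ _ _ _ (hHmem i) hw
  eq_zero_of_lt i hi := by
    have hbot : A (2 * i + 1) = ⊥ := hbound _ (by omega)
    exact (Submodule.mem_bot R).1 (hbot ▸ hHmem i)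
  apply_eq := hD

theorem IsTwistedDifferential.map_map_eq_zero {W : Type*} [Ring W] [Algebra ℝ W]
    {A : ℤ → Submodule ℝ W} {d D : W →ₗ[ℝ] W} {Hc : ℕ → W} {m : ℕ}
    (hD : IsTwistedDifferential A d D Hc m)
    (hd2 : ∀ x, d (d x) = 0)
    (hleib : ∀ (i : ℤ) (x y : W), x ∈ A i → d (x * y) = d x * y + ((-1 : ℝ) ^ i) • (x * d y))
    (hgcomm : ∀ (i j : ℤ) (x y : W), x ∈ A i → y ∈ A j → x * y = ((-1 : ℝ) ^ (i * j)) • (y * x))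
    (hHmem : ∀ i : ℕ, Hc i ∈ A (2 * (i : ℤ) + 1)) (hHcl : ∀ i, d (Hc i) = 0) (w : W) :
    D (D w) = 0 := by
  have hodd (i : ℕ) : Odd (2 * (i : ℤ) + 1) := odd_two_mul_add_one _
  have hdH (i : ℕ) (w : W) : d (Hc i * w) = -(Hc i * d w) := by
    rw [hleib _ _ _ (hHmem i), hHcl, zero_mul, zero_add, (hodd i).neg_one_zpow, neg_one_smul]
  have hHH (i j : ℕ) : Hc i * Hc j = -(Hc j * Hc i) := by
    rw [hgcomm _ _ _ _ (hHmem i) (hHmem j), ((hodd i).mul (hodd j)).neg_one_zpow, neg_one_smul]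
  have : IsAddTorsionFree W := .of_isTorsionFree ℝ W
  exact twisted_apply_apply_eq_zero hD.apply_eq hd2 (map_sum_mul_eq_neg fun i _ => hdH i)
    (sum_mul_sum_self_eq_zero_of_anticommute fun i _ j _ => hHH i j) w

theorem cup_product_description_of_higher_differentials_general {W : Type} [Ring W] [Algebra ℝ W]
    {A : ℤ → Submodule ℝ W} [DirectSum.Decomposition A] {d D : W →ₗ[ℝ] W} {Hc : ℕ → W} {m : ℕ}
    (hD : IsTwistedDifferential A d D Hc m) (hDD : ∀ w, D (D w) = 0) (t : ℕ) (p q : ℤ) {x : W}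
    (hxp : x ∈ A p) (hsurv : ∃ z ∈ Zcyc A D (2 * t + 3) p q, z - x ∈ Kfil A (p + 1)) :
    ∃ xs : ℕ → W, xs 0 = x ∧
      (∀ i : ℕ, xs i ∈ A (p + 2 * i)) ∧
      (∀ j ≤ t, d (xs j) + ∑ i ∈ Finset.Icc 1 j, Hc i * xs (j - i) = 0) ∧
      ∃ (hz : x + ∑ i ∈ Finset.Icc 1 t, xs i ∈ Zcyc A D (2 * t + 3) p q)
        (hDz : D (x + ∑ i ∈ Finset.Icc 1 t, xs i)
          ∈ Zcyc A D (2 * t + 3) (p + 2 * t + 3) (q - 2 * t - 2)),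
        D (x + ∑ i ∈ Finset.Icc 1 t, xs i)
            - ((∑ i ∈ Finset.Icc 1 t, Hc i * xs (t - i + 1)) + Hc (t + 1) * x)
          ∈ Kfil A (p + 2 * t + 4) ∧
        dpage A D (2 * t + 3) p q (p + 2 * t + 3) (q - 2 * t - 2)
            (by push_cast; ring) (by push_cast; ring)
            (pageCls A D (2 * t + 3) p q (x + ∑ i ∈ Finset.Icc 1 t, xs i) hz)
          = pageCls A D (2 * t + 3) (p + 2 * t + 3) (q - 2 * t - 2)
              (D (x + ∑ i ∈ Finset.Icc 1 t, xs i)) hDz := by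
  obtain ⟨z, ⟨⟨hzK, hzP⟩, hDzK⟩, hzx⟩ := hsurv
  change D z ∈ Kfil A _ at hDzK
  let xs (i : ℕ) : W := gradedComponent A (p + 2 * i) z
  obtain rfl : xs 0 = x := by
    simpa [xs] using gradedComponent_eq_of_sub_mem_Kfil hxp hzx
  have hxs (i : ℕ) : xs i ∈ A (p + 2 * i) := gradedComponent_mem A _ z
  have hrel (j : ℕ) (hj : j < t + 1) :
      d (xs j) + ∑ i ∈ Finset.Icc 1 j, Hc i * xs (j - i) = 0 :=
    hD.relation_of_map_mem_Kfil hzK hDzK (by push_cast; omega)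
  have hDsum : D (∑ i ∈ Finset.range (t + 1), xs i) ∈ Kfil A (p + (2 * t + 3 : ℕ)) := by
    rw [show p + (2 * t + 3 : ℕ) = p + 2 * (t + 1 : ℕ) + 1 by push_cast; ring]
    exact hD.map_sum_range_mem_Kfil hxs hrel
  have hsum : ∑ i ∈ Finset.range (t + 1), xs i ∈ Zcyc A D (2 * t + 3) p q :=
    ⟨⟨sum_range_mem_Kfil hxs _, Submodule.sum_mem _ fun _ _ => gradedComponent_mem_iSup hzP _⟩,
      hDsum⟩
  have hDsum_Zcyc : D (∑ i ∈ Finset.range (t + 1), xs i) ∈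
      Zcyc A D (2 * t + 3) (p + 2 * t + 3) (q - 2 * t - 2) :=
    map_mem_Zcyc hDD hD.map_mem_ParPart (by push_cast; ring) (by push_cast; ring) hsum
  refine ⟨xs, rfl, hxs, fun j hj => hrel j (by omega), ?_⟩
  rw [add_sum_Icc_one_eq_sum_range xs t, sum_Icc_mul_add_eq_sum_Icc_succ Hc xs t,
    show p + 2 * (t : ℤ) + 4 = p + 2 * (t + 1 : ℕ) + 2 by push_cast; ring]
  exact ⟨hsum, hDsum_Zcyc, hD.map_sum_range_sub_mem_Kfil hxs hrel,
    dpage_pageCls hDD hD.map_mem_ParPart _ _ hsum hDsum_Zcyc⟩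

/-- Theorem 4.1 of the paper. For `H = ∑_{i=1}^{[(n-1)/2]} H_{2i+1}` and a
class `[x_p]_{2t+3} ∈ E_{2t+3}^{p,q}` (`t ≥ 1`) represented by the closed `p`-form `x`, there
exist forms `x_{p+2i} = xs i ∈ Ω^{p+2i}(M)` (`1 ≤ i ≤ t`) such that, setting
`z = x + ∑_{i=1}^t xs i` (higher components chosen to vanish), the homogeneous components
`y_{p+2j+1}` of `D z` vanish for `0 ≤ j ≤ t` (so `z ∈ Z_{2t+3}^{p,q}`), and the differential
is given by the cup-product formula
`d_{2t+3}[x_p]_{2t+3} = [∑_{i=1}^t H_{2i+1} ∧ x_{p+2(t-i)+2} + H_{2t+3} ∧ x_p]_{2t+3}`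
(the class on the right being represented by the permanent cocycle `D z`, whose leading
component is exactly that sum). -/
theorem cup_product_description_of_higher_differentials {W : Type} [Ring W] [Algebra ℝ W]
    (n : ℕ) (A : ℤ → Submodule ℝ W) [DirectSum.Decomposition A]
    (hbound : ∀ i : ℤ, i < 0 ∨ (n : ℤ) < i → A i = ⊥)
    (hmul : ∀ (i j : ℤ) (x y : W), x ∈ A i → y ∈ A j → x * y ∈ A (i + j))
    (d : W →ₗ[ℝ] W)
    (hdmem : ∀ i : ℤ, ∀ x ∈ A i, d x ∈ A (i + 1))
    (hd2 : ∀ x : W, d (d x) = 0)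
    (hleib : ∀ (i : ℤ) (x y : W), x ∈ A i →
      d (x * y) = d x * y + ((-1 : ℝ) ^ i) • (x * d y))
    (hgcomm : ∀ (i j : ℤ) (x y : W), x ∈ A i → y ∈ A j →
      x * y = ((-1 : ℝ) ^ (i * j)) • (y * x))
    (Hc : ℕ → W)
    (hHmem : ∀ i : ℕ, Hc i ∈ A (2 * (i : ℤ) + 1))
    (hHcl : ∀ i : ℕ, d (Hc i) = 0)
    (H : W) (hHdef : H = ∑ i ∈ Finset.Icc 1 ((n - 1) / 2), Hc i)
    (D : W →ₗ[ℝ] W) (hD : ∀ w : W, D w = d w + H * w)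
    (t : ℕ) (ht : 1 ≤ t) (p q : ℤ) (hq : q % 2 = 0)
    (x : W) (hxp : x ∈ A p) (hxd : d x = 0)
    (hsurv : ∃ z ∈ Zcyc A D (2 * t + 3) p q, z - x ∈ Kfil A (p + 1)) :
    ∃ xs : ℕ → W, xs 0 = x ∧
      (∀ i : ℕ, 1 ≤ i → i ≤ t → xs i ∈ A (p + 2 * i)) ∧
      (∀ j : ℕ, 1 ≤ j → j ≤ t →
        d (xs j) + ∑ i ∈ Finset.Icc 1 j, Hc i * xs (j - i) = 0) ∧
      ∃ (hz : x + ∑ i ∈ Finset.Icc 1 t, xs i ∈ Zcyc A D (2 * t + 3) p q)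
        (hDz : D (x + ∑ i ∈ Finset.Icc 1 t, xs i)
          ∈ Zcyc A D (2 * t + 3) (p + 2 * t + 3) (q - 2 * t - 2)),
        D (x + ∑ i ∈ Finset.Icc 1 t, xs i)
            - ((∑ i ∈ Finset.Icc 1 t, Hc i * xs (t - i + 1)) + Hc (t + 1) * x)
          ∈ Kfil A (p + 2 * t + 4) ∧
        dpage A D (2 * t + 3) p q (p + 2 * t + 3) (q - 2 * t - 2)
            (by push_cast; ring) (by push_cast; ring)
            (pageCls A D (2 * t + 3) p q (x + ∑ i ∈ Finset.Icc 1 t, xs i) hz)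
          = pageCls A D (2 * t + 3) (p + 2 * t + 3) (q - 2 * t - 2)
              (D (x + ∑ i ∈ Finset.Icc 1 t, xs i)) hDz := by
  have hDtw := isTwistedDifferential_of_bounded (fun i hi => hbound i (.inr hi)) hmul hdmem hHmem
    (hHdef ▸ hD)
  obtain ⟨xs, hxs_zero, hxs, hrel, hclass⟩ :=
    cup_product_description_of_higher_differentials_general hDtw
      (hDtw.map_map_eq_zero hd2 hleib hgcomm hHmem hHcl) t p q hxp hsurv
  exact ⟨xs, hxs_zero, fun i _ _ => hxs i, fun j _ => hrel j, hclass⟩
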